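/- arXiv:1710.03731 — 4 statements merged into one kernel-verified Lean document; each statement's English description precedes it below -/
import Mathlib

section
/- Let A_p be a weight sequence satisfying (M.1) with associated function A. Then the decreasing weight system V_{{A_p}} = (e^{A(·/n)})_{n≥1} on ℝ^d satisfies condition (Ω): for every n ≥ 1 there is m > n such that for every k > m there are θ ∈ (0,1) and C > 0 with e^{A(t/m)} ≤ C·e^{(1−θ)A(t/n)}·e^{θA(t/k)} for all t ≥ 0. -/
/-!
The function `x ↦ A(e^x)` is a supremum of the affine functions `x ↦ p x + log (A_0 / A_p)`, hence
convex; the supremum is finite because `A_{p+1} / A_p → ∞` (`bddAbove_log_terms`). For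
`n < m < k`, `log (t / m)` is a convex combination `(1 - θ) log (t / n) + θ log (t / k)` with
`θ = log (m / n) / log (k / n)`, independent of `t`. Convexity then gives (Ω) with `m = n + 1` and
`C = 1`.
-/

open Filter

/-- A weight sequence: positive with `A_{p+1}/A_p → ∞`. -/
def IsWeightSeq (Ap : ℕ → ℝ) : Prop :=
  (∀ p, 0 < Ap p) ∧ Tendsto (fun p => Ap (p + 1) / Ap p) atTop atTop

/-- Condition (M.1) (logarithmic convexity). -/
def CondM1 (Ap : ℕ → ℝ) : Prop := ∀ p : ℕ, 1 ≤ p → Ap p ^ 2 ≤ Ap (p - 1) * Ap (p + 1)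

/-- Condition (M.2) with constants `C0, H`. -/
def CondM2 (Ap : ℕ → ℝ) (C0 H : ℝ) : Prop :=
  ∀ p q : ℕ, Ap (p + q) ≤ C0 * H ^ (p + q) * Ap p * Ap q

/-- The associated function `A(t) = sup_p log (t^p A_0 / A_p)` for `t ≠ 0`, `A(0) = 0`. -/
noncomputable def assocFn (Ap : ℕ → ℝ) (t : ℝ) : ℝ :=
  if t = 0 then 0 else ⨆ p : ℕ, Real.log (t ^ p * Ap 0 / Ap p)

lemma log_term_eq {Ap : ℕ → ℝ} (hpos : ∀ p, 0 < Ap p) {t : ℝ} (ht : 0 < t) (p : ℕ) :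
    Real.log (t ^ p * Ap 0 / Ap p) = p * Real.log t + Real.log (Ap 0 / Ap p) := by
  rw [mul_div_assoc, Real.log_mul (pow_pos ht p).ne' (div_pos (hpos 0) (hpos p)).ne', Real.log_pow]

/-- The supremum defining `assocFn` is finite: once `A_{p+1} / A_p ≥ t`, the terms decrease. -/
lemma bddAbove_log_terms {Ap : ℕ → ℝ} (hAw : IsWeightSeq Ap) {t : ℝ} (ht : 0 < t) :
    BddAbove (Set.range fun p : ℕ => Real.log (t ^ p * Ap 0 / Ap p)) := by
  obtain ⟨hpos, hlim⟩ := hAw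
  obtain ⟨N, hN⟩ := Filter.eventually_atTop.1 (hlim.eventually_ge_atTop t)
  apply Filter.IsBoundedUnder.bddAbove_range
  refine Filter.isBoundedUnder_of_eventually_le (a := Real.log (t ^ N * Ap 0 / Ap N)) ?_
  filter_upwards [Filter.eventually_ge_atTop N] with p hp
  induction p, hp using Nat.le_induction with
  | base => exact le_rfl
  | succ p hp ih =>
    refine le_trans (Real.log_le_log ?_ ?_) ih
    · exact div_pos (mul_pos (pow_pos ht _) (hpos 0)) (hpos _)
    · have h : t * Ap p ≤ Ap (p + 1) := (le_div_iff₀ (hpos p)).1 (hN p hp)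
      rw [div_le_div_iff₀ (hpos _) (hpos _)]
      have h0 : 0 ≤ t ^ p * Ap 0 := (mul_pos (pow_pos ht p) (hpos 0)).le
      calc t ^ (p + 1) * Ap 0 * Ap p = t ^ p * Ap 0 * (t * Ap p) := by ring
        _ ≤ t ^ p * Ap 0 * Ap (p + 1) := mul_le_mul_of_nonneg_left h h0

/-- Convexity of `A` in the variable `log t`. -/
lemma assocFn_le_of_log_eq {Ap : ℕ → ℝ} (hAw : IsWeightSeq Ap) {r s t θ : ℝ}
    (hr : 0 < r) (hs : 0 < s) (ht : 0 < t) (hθ0 : 0 ≤ θ) (hθ1 : θ ≤ 1)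
    (h : Real.log s = (1 - θ) * Real.log r + θ * Real.log t) :
    assocFn Ap s ≤ (1 - θ) * assocFn Ap r + θ * assocFn Ap t := by
  simp only [assocFn, hr.ne', hs.ne', ht.ne', if_false]
  refine ciSup_le fun p => ?_
  have h1 := mul_le_mul_of_nonneg_left (le_ciSup (bddAbove_log_terms hAw hr) p) (sub_nonneg.2 hθ1)
  have h2 := mul_le_mul_of_nonneg_left (le_ciSup (bddAbove_log_terms hAw ht) p) hθ0
  refine le_trans (le_of_eq ?_) (add_le_add h1 h2)
  simp only [log_term_eq hAw.1 hr, log_term_eq hAw.1 hs, log_term_eq hAw.1 ht, h]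
  ring

/-- for a weight sequence satisfying (M.1), the decreasing weight system
`V_{{A_p}} = (e^{A(·/n)})_n` satisfies condition (Ω). -/
theorem Roumieu_weight_system_Omega
    (Ap : ℕ → ℝ) (hAw : IsWeightSeq Ap) (hA1 : CondM1 Ap) :
    ∀ n : ℕ, 1 ≤ n → ∃ m : ℕ, n < m ∧ ∀ k : ℕ, m < k →
      ∃ θ : ℝ, θ ∈ Set.Ioo (0 : ℝ) 1 ∧ ∃ C : ℝ, 0 < C ∧
        ∀ t : ℝ, 0 ≤ t →
          Real.exp (assocFn Ap (t / m)) ≤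
            C * Real.exp ((1 - θ) * assocFn Ap (t / n)) *
              Real.exp (θ * assocFn Ap (t / k)) := by
  intro n hn
  refine ⟨n + 1, Nat.lt_succ_self n, fun k hk => ?_⟩
  generalize hm : n + 1 = m at hk ⊢
  have hn0 : (0 : ℝ) < n := by exact_mod_cast hn
  have hnm : (n : ℝ) < m := by exact_mod_cast (by omega : n < m)
  have hmk : (m : ℝ) < k := by exact_mod_cast hk
  have hm0 := hn0.trans hnm
  have hk0 := hm0.trans hmk
  have l1 := Real.log_lt_log hn0 hnm
  have l2 := Real.log_lt_log hm0 hmk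
  have hd : 0 < Real.log k - Real.log n := by linarith
  refine ⟨(Real.log m - Real.log n) / (Real.log k - Real.log n),
    ⟨div_pos (by linarith) hd, (div_lt_one hd).2 (by linarith)⟩, 1, one_pos, fun t ht => ?_⟩
  rw [one_mul, ← Real.exp_add, Real.exp_le_exp]
  rcases ht.eq_or_lt with rfl | ht
  · simp [assocFn]
  · refine assocFn_le_of_log_eq hAw (div_pos ht hn0) (div_pos ht hm0) (div_pos ht hk0)
      (div_pos (by linarith) hd).le ((div_le_one hd).2 (by linarith)) ?_
    rw [Real.log_div ht.ne' hn0.ne', Real.log_div ht.ne' hm0.ne', Real.log_div ht.ne' hk0.ne']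
    field_simp
    ring
end

section
/- Let A_p be a weight sequence satisfying (M.1) and (M.2), with associated function A. Then the decreasing weight system V_{(A_p)} = (e^{−A(n·)})_{n≥1} satisfies condition (Ω) — i.e., for every n ≥ 1 there is m > n such that for every k > m there are θ ∈ (0,1) and C > 0 with e^{−A(mt)} ≤ C·e^{−(1−θ)A(nt)}·e^{−θA(kt)} for all t ≥ 0 — if and only if A_p satisfies condition (M.2)*: there exists Q ∈ ℕ, Q ≥ 1, such that 2a_p ≤ a_{Qp} for all p ≥ 1, where a_p := A_p/A_{p−1}. -/
/-!
Write `ℓ p = log A_p` and `A` for the associated function. Both conditions are equivalent to the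
doubling estimate `A(2t) ≤ K A(t) + C`.

* (Ω) implies doubling: apply (Ω) with `n = 1` and `k = 2m`, and drop the nonnegative term
  `(1 - θ) A(t)`.
* Doubling implies (Ω): by (M.2), `2 A(t) ≤ A(Ht) + c`. Taking `m ≥ nH`, this gives
  `2 A(nt) ≤ A(mt) + c`, while iterated doubling gives `A(kt) ≤ K A(nt) + C`; then `θ = 1 / K` works.
* (M.2)* implies doubling: the inequality `a_{Qp+r} ≥ 2 a_p` is summed up to a lower bound for
  `ℓ q` by means of `Q` terms `ℓ i`, `i ≈ q / Q` (`block_lower`); the `Q - 1` unmatched factors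
  `t^{Q-1}` are absorbed in one more copy of `A(t)`.
* Doubling implies (M.2)*: at `t = a_{p+1}` the supremum is attained at the index `p`, so (M.2) gives
  `A(t / H) ≤ p log H + c`, hence `A(4t) ≤ K (p log H + c) + C`. If `a_{Q(p+1)} < 2t`, then
  `A(4t) ≥ (Q(p+1) - 1) log 2`, which is impossible for `Q` large.
-/

open Filter

section Assoc

variable {Ap : ℕ → ℝ}

/-- In logarithmic form (M.1) says that the increments of `log A_p` are nondecreasing. -/
lemma incr_mono (hpos : ∀ p, 0 < Ap p) (h1 : CondM1 Ap) :
    Monotone (fun p => Real.log (Ap (p + 1)) - Real.log (Ap p)) := by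
  apply monotone_nat_of_le_succ
  intro p
  have h := h1 (p + 1) (by omega)
  have h' := Real.log_le_log (pow_pos (hpos _) 2) h
  rw [Real.log_pow, Nat.add_sub_cancel, Real.log_mul (hpos _).ne' (hpos _).ne'] at h'
  push_cast at h'
  show _ ≤ _
  linarith

lemma log_ge_tangent {l : ℕ → ℝ} (hm : Monotone (fun p => l (p + 1) - l p)) (p d : ℕ) :
    l p + d * (l (p + 1) - l p) ≤ l (p + d) := by
  induction d with
  | zero => simp
  | succ d ih =>
    have h := hm (show p ≤ p + d by omega)
    simp only at h
    rw [← add_assoc]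
    push_cast
    linarith

lemma log_le_tangent {l : ℕ → ℝ} (hm : Monotone (fun p => l (p + 1) - l p)) (q d : ℕ) :
    l (q + d) ≤ l q + d * (l (q + d + 1) - l (q + d)) := by
  induction d with
  | zero => simp
  | succ d ih =>
    have h := hm (show q + d ≤ q + d + 1 by omega)
    simp only at h
    have h2 := mul_le_mul_of_nonneg_left h (show (0 : ℝ) ≤ d + 1 by positivity)
    rw [← add_assoc]
    push_cast
    linarith

lemma log_term (hpos : ∀ p, 0 < Ap p) {t : ℝ} (ht : 0 < t) (p : ℕ) :
    Real.log (t ^ p * Ap 0 / Ap p) = p * Real.log t + Real.log (Ap 0) - Real.log (Ap p) := by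
  rw [Real.log_div (mul_pos (pow_pos ht p) (hpos 0)).ne' (hpos p).ne',
    Real.log_mul (pow_pos ht p).ne' (hpos 0).ne', Real.log_pow]

/-- The supremum defining `A(t)` is finite, because `a_p → ∞`. -/
lemma assoc_bdd (hw : IsWeightSeq Ap) (h1 : CondM1 Ap) {t : ℝ} (ht : 0 < t) :
    BddAbove (Set.range fun p : ℕ => Real.log (t ^ p * Ap 0 / Ap p)) := by
  obtain ⟨hpos, hlim⟩ := hw
  obtain ⟨p, hp⟩ := (hlim.eventually_ge_atTop t).exists
  have hp' := Real.log_le_log ht hp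
  rw [Real.log_div (hpos _).ne' (hpos _).ne'] at hp'
  apply Filter.IsBoundedUnder.bddAbove_range
  refine ⟨p * Real.log t + Real.log (Ap 0) - Real.log (Ap p), ?_⟩
  rw [Filter.eventually_map]
  filter_upwards [Filter.eventually_ge_atTop p] with q hq
  obtain ⟨d, rfl⟩ := Nat.exists_eq_add_of_le hq
  rw [log_term hpos ht]
  have h := log_ge_tangent (l := fun p => Real.log (Ap p)) (incr_mono hpos h1) p d
  have h2 := mul_le_mul_of_nonneg_left hp' (Nat.cast_nonneg (α := ℝ) d)
  push_cast
  linarith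

lemma term_le_assoc (hw : IsWeightSeq Ap) (h1 : CondM1 Ap) {t : ℝ} (ht : 0 < t) (p : ℕ) :
    p * Real.log t + Real.log (Ap 0) - Real.log (Ap p) ≤ assocFn Ap t := by
  rw [assocFn, if_neg ht.ne', ← log_term hw.1 ht]
  exact le_ciSup (assoc_bdd hw h1 ht) p

lemma assoc_le (hw : IsWeightSeq Ap) {t B : ℝ} (ht : 0 < t)
    (h : ∀ p : ℕ, p * Real.log t + Real.log (Ap 0) - Real.log (Ap p) ≤ B) :
    assocFn Ap t ≤ B := by
  rw [assocFn, if_neg ht.ne']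
  refine ciSup_le fun p => ?_
  rw [log_term hw.1 ht]
  exact h p

lemma assoc_zero : assocFn Ap 0 = 0 := by simp [assocFn]

lemma assoc_nonneg (hw : IsWeightSeq Ap) (h1 : CondM1 Ap) {t : ℝ} (ht : 0 ≤ t) :
    0 ≤ assocFn Ap t := by
  rcases ht.eq_or_lt with rfl | ht
  · rw [assoc_zero]
  · simpa using term_le_assoc hw h1 ht 0

lemma assoc_mono (hw : IsWeightSeq Ap) (h1 : CondM1 Ap) {s t : ℝ} (hs : 0 ≤ s) (hst : s ≤ t) :
    assocFn Ap s ≤ assocFn Ap t := by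
  rcases hs.eq_or_lt with rfl | hs
  · rw [assoc_zero]
    exact assoc_nonneg hw h1 hst
  · refine assoc_le hw hs fun p => ?_
    have h := term_le_assoc hw h1 (hs.trans_le hst) p
    have h2 := mul_le_mul_of_nonneg_left (Real.log_le_log hs hst) (Nat.cast_nonneg (α := ℝ) p)
    linarith

/-- The effect of (M.2) on the associated function, obtained from its case `p = q`. -/
lemma two_assoc_le (hw : IsWeightSeq Ap) (h1 : CondM1 Ap) {C0 H : ℝ} (hC : 1 ≤ C0) (hH : 1 ≤ H)
    (h2 : CondM2 Ap C0 H) :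
    ∃ c : ℝ, 0 ≤ c ∧ ∀ t : ℝ, 0 ≤ t → 2 * assocFn Ap t ≤ assocFn Ap (H * t) + c := by
  have hC' : 0 < C0 := by linarith
  have hH' : 0 < H := by linarith
  refine ⟨|Real.log (Ap 0) + Real.log C0|, abs_nonneg _, fun t ht => ?_⟩
  rcases ht.eq_or_lt with rfl | ht
  · simp [assoc_zero]
  · have key : assocFn Ap t ≤
        (assocFn Ap (H * t) + |Real.log (Ap 0) + Real.log C0|) / 2 := by
      refine assoc_le hw ht fun p => ?_
      have h := Real.log_le_log (hw.1 _) (h2 p p)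
      rw [Real.log_mul (by have := hw.1 p; positivity) (hw.1 p).ne',
        Real.log_mul (by positivity) (hw.1 p).ne',
        Real.log_mul (by positivity) (by positivity), Real.log_pow] at h
      have h3 := term_le_assoc hw h1 (mul_pos hH' ht) (p + p)
      rw [Real.log_mul hH'.ne' ht.ne'] at h3
      have h4 := le_abs_self (Real.log (Ap 0) + Real.log C0)
      push_cast at h h3
      linarith
    linarith

/-- The doubling estimate `A(2t) ≤ K A(t) + C`. -/
def Doubling (Ap : ℕ → ℝ) : Prop :=
  ∃ K C : ℝ, 1 ≤ K ∧ 0 ≤ C ∧ ∀ t : ℝ, 0 ≤ t → assocFn Ap (2 * t) ≤ K * assocFn Ap t + C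

/-- Iterated doubling allows an arbitrary dilation factor. -/
lemma Doubling.dilate (hw : IsWeightSeq Ap) (h1 : CondM1 Ap) (hD : Doubling Ap) (x : ℝ)
    (hx : 0 ≤ x) :
    ∃ K C : ℝ, 1 ≤ K ∧ 0 ≤ C ∧ ∀ t : ℝ, 0 ≤ t → assocFn Ap (x * t) ≤ K * assocFn Ap t + C := by
  obtain ⟨K, C, hK, hC, h⟩ := hD
  have hpow : ∀ j : ℕ, ∃ K C : ℝ, 1 ≤ K ∧ 0 ≤ C ∧
      ∀ t : ℝ, 0 ≤ t → assocFn Ap (2 ^ j * t) ≤ K * assocFn Ap t + C := by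
    intro j
    induction j with
    | zero => exact ⟨1, 0, le_rfl, le_rfl, fun t _ => by simp⟩
    | succ j ih =>
      obtain ⟨K', C', hK', hC', h'⟩ := ih
      refine ⟨K * K', K * C' + C, by nlinarith, by positivity, fun t ht => ?_⟩
      have e1 := h (2 ^ j * t) (by positivity)
      have e2 := mul_le_mul_of_nonneg_left (h' t ht) (show 0 ≤ K by linarith)
      rw [pow_succ', mul_assoc]
      linarith
  obtain ⟨j, hj⟩ := pow_unbounded_of_one_lt x (one_lt_two : (1 : ℝ) < 2)
  obtain ⟨K', C', hK', hC', h'⟩ := hpow j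
  refine ⟨K', C', hK', hC', fun t ht => (assoc_mono hw h1 (by positivity) ?_).trans (h' t ht)⟩
  exact mul_le_mul_of_nonneg_right hj.le ht

/-- Summation of the increment inequality `log 2 + l_{p+1} - l_p ≤ l_{Q(p+1)} - l_{Q(p+1)-1}`,
here with `Q = R + 1`: the index `R + Qp + r` splits into `Q - r` copies of `p` and `r` copies
of `p + 1`. -/
lemma block_lower {l : ℕ → ℝ} (hm : Monotone (fun p => l (p + 1) - l p)) (R : ℕ)
    (hQ : ∀ p : ℕ, Real.log 2 + (l (p + 1) - l p) ≤
      l (R + (R + 1) * p + 1) - l (R + (R + 1) * p)) (p : ℕ) :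
    ∀ r : ℕ, r ≤ R + 1 →
      l R - (R + 1) * l 0 + ((R + 1) * p + r) * Real.log 2 + (R + 1 - r) * l p + r * l (p + 1)
        ≤ l (R + (R + 1) * p + r) := by
  induction p with
  | zero =>
    intro r
    induction r with
    | zero => intro _; simp
    | succ r ih =>
      intro hr
      have e1 := ih (by omega)
      have e2 := hm (show R + (R + 1) * 0 ≤ R + (R + 1) * 0 + r by omega)
      have e3 := hQ 0
      simp only at e2
      rw [← add_assoc]
      push_cast at e1 ⊢
      linarith
  | succ p ihp =>
    intro r
    induction r with
    | zero =>
      intro _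
      -- The last position of one block is the first position of the next one.
      have e := ihp (R + 1) le_rfl
      have e' : R + (R + 1) * (p + 1) + 0 = R + (R + 1) * p + (R + 1) := by ring
      rw [e']
      push_cast at e ⊢
      linarith
    | succ r ih =>
      intro hr
      have e1 := ih (by omega)
      have e2 := hm (show R + (R + 1) * (p + 1) ≤ R + (R + 1) * (p + 1) + r by omega)
      have e3 := hQ (p + 1)
      simp only at e2
      rw [← add_assoc]
      push_cast at e1 ⊢
      linarith

lemma doubling_of_M2star (hw : IsWeightSeq Ap) (h1 : CondM1 Ap)
    (h : ∃ Q : ℕ, 1 ≤ Q ∧ ∀ p : ℕ, 1 ≤ p →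
      2 * (Ap p / Ap (p - 1)) ≤ Ap (Q * p) / Ap (Q * p - 1)) : Doubling Ap := by
  obtain ⟨Q, hQ1, hQ⟩ := h
  obtain ⟨R, rfl⟩ : ∃ R, Q = R + 1 := ⟨Q - 1, by omega⟩
  have hpos := hw.1
  have hm := incr_mono hpos h1
  have hlog2 : 0 < Real.log 2 := Real.log_pos one_lt_two
  have hQl : ∀ p : ℕ, Real.log 2 + (Real.log (Ap (p + 1)) - Real.log (Ap p)) ≤
      Real.log (Ap (R + (R + 1) * p + 1)) - Real.log (Ap (R + (R + 1) * p)) := by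
    intro p
    have e := hQ (p + 1) (by omega)
    have e1 : (R + 1) * (p + 1) = R + (R + 1) * p + 1 := by ring
    rw [e1, Nat.add_sub_cancel, Nat.add_sub_cancel] at e
    have e2 := Real.log_le_log
      (mul_pos two_pos (div_pos (hpos _) (hpos _))) e
    rwa [Real.log_mul two_ne_zero (div_pos (hpos _) (hpos _)).ne',
      Real.log_div (hpos _).ne' (hpos _).ne', Real.log_div (hpos _).ne' (hpos _).ne'] at e2
  refine ⟨R + 2, R * Real.log 2, by linarith [Nat.cast_nonneg (α := ℝ) R],
    by positivity, fun t ht => ?_⟩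
  rcases ht.eq_or_lt with rfl | ht
  · simp only [mul_zero, assoc_zero, zero_add]
    positivity
  have hA0 := assoc_nonneg hw h1 ht.le
  refine assoc_le hw (mul_pos two_pos ht) fun q => ?_
  rw [Real.log_mul two_ne_zero ht.ne']
  rcases le_or_gt q R with hq | hq
  · have e1 := term_le_assoc hw h1 ht q
    have e2 : (q : ℝ) * Real.log 2 ≤ R * Real.log 2 :=
      mul_le_mul_of_nonneg_right (by exact_mod_cast hq) hlog2.le
    have e3 : 0 ≤ (R + 1 : ℝ) * assocFn Ap t := by positivity
    linarith
  · obtain ⟨p, r, hr, rfl⟩ : ∃ p r : ℕ, r ≤ R + 1 ∧ q = R + (R + 1) * p + r := by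
      refine ⟨(q - R) / (R + 1), (q - R) % (R + 1), (Nat.mod_lt _ (by omega)).le, ?_⟩
      have := Nat.div_add_mod (q - R) (R + 1)
      omega
    have e := block_lower (l := fun p => Real.log (Ap p)) hm R hQl p r hr
    have hr' : (r : ℝ) ≤ R + 1 := by exact_mod_cast hr
    have f1 := term_le_assoc hw h1 ht R
    have f2 := mul_le_mul_of_nonneg_left (term_le_assoc hw h1 ht p)
      (show (0 : ℝ) ≤ R + 1 - r by linarith)
    have f3 := mul_le_mul_of_nonneg_left (term_le_assoc hw h1 ht (p + 1))
      (Nat.cast_nonneg (α := ℝ) r)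
    push_cast at f3 ⊢
    linarith

lemma M2star_of_doubling (hw : IsWeightSeq Ap) (h1 : CondM1 Ap)
    (hA2 : ∃ C0 H : ℝ, 1 ≤ C0 ∧ 1 ≤ H ∧ CondM2 Ap C0 H) (hD : Doubling Ap) :
    ∃ Q : ℕ, 1 ≤ Q ∧ ∀ p : ℕ, 1 ≤ p →
      2 * (Ap p / Ap (p - 1)) ≤ Ap (Q * p) / Ap (Q * p - 1) := by
  obtain ⟨C0, H, hC0, hH, hA2⟩ := hA2
  have hpos := hw.1
  have hm := incr_mono hpos h1
  have hlog2 : 0 < Real.log 2 := Real.log_pos one_lt_two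
  have hH' : 0 < H := by linarith
  have hlogH : 0 ≤ Real.log H := Real.log_nonneg hH
  obtain ⟨c, hc, h2⟩ := two_assoc_le hw h1 hC0 hH hA2
  obtain ⟨K, C, hK, hC, hD⟩ := hD.dilate hw h1 (4 * H) (by positivity)
  obtain ⟨N, hN⟩ := exists_nat_gt ((K * (Real.log H + c) + C) / Real.log 2)
  rw [div_lt_iff₀ hlog2] at hN
  refine ⟨N + 1, by omega, fun p' hp' => ?_⟩
  obtain ⟨p, rfl⟩ : ∃ p, p' = p + 1 := ⟨p' - 1, by omega⟩
  have e1 : (N + 1) * (p + 1) = N * (p + 1) + p + 1 := by ring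
  rw [e1, Nat.add_sub_cancel, Nat.add_sub_cancel]
  set q := N * (p + 1) + p with hq
  by_contra! hlt
  set t := Ap (p + 1) / Ap p with ht_def
  have ht : 0 < t := div_pos (hpos _) (hpos _)
  have hlt' := Real.log_lt_log (div_pos (hpos _) (hpos _)) hlt
  rw [Real.log_div (hpos _).ne' (hpos _).ne', Real.log_mul two_ne_zero ht.ne'] at hlt'
  have hlogt : Real.log t = Real.log (Ap (p + 1)) - Real.log (Ap p) :=
    Real.log_div (hpos _).ne' (hpos _).ne'
  have hs : 0 < t / H := div_pos ht (by linarith)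
  -- At `t = a_{p+1}` the supremum is attained at the index `p`.
  have hatt : assocFn Ap t ≤ p * Real.log t + Real.log (Ap 0) - Real.log (Ap p) := by
    refine assoc_le hw ht fun j => ?_
    rcases le_total p j with hj | hj
    · obtain ⟨d, rfl⟩ := Nat.exists_eq_add_of_le hj
      have e := log_ge_tangent (l := fun p => Real.log (Ap p)) hm p d
      simp only [← hlogt] at e
      push_cast
      linarith
    · obtain ⟨d, rfl⟩ := Nat.exists_eq_add_of_le hj
      have e := log_le_tangent (l := fun p => Real.log (Ap p)) hm j d
      simp only [← hlogt] at e
      push_cast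
      linarith
  have g1 := h2 (t / H) hs.le
  rw [mul_div_cancel₀ _ hH'.ne'] at g1
  have g2 := term_le_assoc hw h1 hs p
  rw [Real.log_div ht.ne' hH'.ne'] at g2
  have g3 : assocFn Ap (t / H) ≤ p * Real.log H + c := by linarith
  have g4 := hD (t / H) hs.le
  rw [mul_assoc, mul_div_cancel₀ _ hH'.ne'] at g4
  -- All ratios up to the index `q` are at most `2t`, so the `q`-th term of `A(4t)` is large.
  have g5 := term_le_assoc hw h1 (mul_pos four_pos ht) q
  have h4 : Real.log 4 = 2 * Real.log 2 := by
    rw [show (4 : ℝ) = 2 ^ 2 by norm_num, Real.log_pow]; norm_num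
  rw [Real.log_mul four_ne_zero ht.ne', h4] at g5
  have g6 := log_le_tangent (l := fun p => Real.log (Ap p)) hm 0 q
  simp only [zero_add] at g6
  have g7 := mul_le_mul_of_nonneg_left hlt'.le (Nat.cast_nonneg (α := ℝ) q)
  have g8 : (q : ℝ) * Real.log 2 ≤ K * (p * Real.log H + c) + C := by
    have := mul_le_mul_of_nonneg_left g3 (show 0 ≤ K by linarith)
    linarith
  have hp0 : (0 : ℝ) ≤ p := Nat.cast_nonneg p
  have g9 : (N : ℝ) * (p + 1) * Real.log 2 ≤ q * Real.log 2 := by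
    refine mul_le_mul_of_nonneg_right ?_ hlog2.le
    rw [hq]; push_cast; linarith
  have g10 := mul_lt_mul_of_pos_right hN (show (0 : ℝ) < p + 1 by linarith)
  have g11 : 0 ≤ K * Real.log H := by positivity
  have g12 : 0 ≤ K * c * p := by positivity
  have g13 : 0 ≤ C * p := by positivity
  linarith

end Assoc

/-- for a weight sequence satisfying (M.1) and (M.2), the decreasing weight
system `V_{(A_p)} = (e^{-A(n·)})_n` satisfies condition (Ω) iff `A_p` satisfies (M.2)*. -/
theorem Beurling_weight_system_Omega_iff_M2star
    (Ap : ℕ → ℝ) (hAw : IsWeightSeq Ap) (hA1 : CondM1 Ap)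
    (hA2 : ∃ C0 H : ℝ, 1 ≤ C0 ∧ 1 ≤ H ∧ CondM2 Ap C0 H) :
    (∀ n : ℕ, 1 ≤ n → ∃ m : ℕ, n < m ∧ ∀ k : ℕ, m < k →
      ∃ θ : ℝ, θ ∈ Set.Ioo (0 : ℝ) 1 ∧ ∃ C : ℝ, 0 < C ∧
        ∀ t : ℝ, 0 ≤ t →
          Real.exp (-assocFn Ap ((m : ℝ) * t)) ≤
            C * Real.exp (-((1 - θ) * assocFn Ap ((n : ℝ) * t))) *
              Real.exp (-(θ * assocFn Ap ((k : ℝ) * t)))) ↔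
    (∃ Q : ℕ, 1 ≤ Q ∧ ∀ p : ℕ, 1 ≤ p →
      2 * (Ap p / Ap (p - 1)) ≤ Ap (Q * p) / Ap (Q * p - 1)) := by
  constructor
  · intro hΩ
    apply M2star_of_doubling hAw hA1 hA2
    obtain ⟨m, hm, hΩ⟩ := hΩ 1 le_rfl
    obtain ⟨θ, ⟨hθ0, hθ1⟩, C, hC, h⟩ := hΩ (2 * m) (by omega)
    have hm0 : (0 : ℝ) < m := by exact_mod_cast (by omega : 0 < m)
    refine ⟨1 / θ, |Real.log C| / θ, by rw [le_div_iff₀ hθ0]; linarith, by positivity,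
      fun t ht => ?_⟩
    have hs : 0 ≤ t / m := by positivity
    have e := h (t / m) hs
    rw [← Real.exp_log hC, ← Real.exp_add, ← Real.exp_add, Real.exp_le_exp] at e
    push_cast at e
    rw [mul_assoc, mul_div_cancel₀ _ hm0.ne', one_mul] at e
    have e2 : 0 ≤ (1 - θ) * assocFn Ap (t / m) :=
      mul_nonneg (by linarith) (assoc_nonneg hAw hA1 hs)
    have e3 := le_abs_self (Real.log C)
    rw [one_div_mul_eq_div, ← add_div, le_div_iff₀ hθ0]
    linarith
  · intro hQ n hn
    have hD := doubling_of_M2star hAw hA1 hQ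
    obtain ⟨C0, H, hC0, hH, hA2⟩ := hA2
    obtain ⟨c, hc, h2⟩ := two_assoc_le hAw hA1 hC0 hH hA2
    obtain ⟨M, hM⟩ := exists_nat_gt (H * n)
    refine ⟨M + n + 1, by omega, fun k _ => ?_⟩
    obtain ⟨K, C, hK, hC, hD⟩ := hD.dilate hAw hA1 k (Nat.cast_nonneg k)
    have hK1 : 0 < K + 1 := by linarith
    -- `K` is enlarged by one to ensure `θ < 1`.
    refine ⟨1 / (K + 1), ⟨by positivity, by rw [div_lt_one hK1]; linarith⟩,
      Real.exp (c + C), Real.exp_pos _, fun t ht => ?_⟩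
    rw [← Real.exp_add, ← Real.exp_add, Real.exp_le_exp]
    have hn1 : (1 : ℝ) ≤ n := by exact_mod_cast hn
    have hnt : 0 ≤ (n : ℝ) * t := by positivity
    have e1 := h2 (n * t) hnt
    have e2 : assocFn Ap (H * (n * t)) ≤ assocFn Ap (((M + n + 1 : ℕ) : ℝ) * t) := by
      refine assoc_mono hAw hA1 (by positivity) ?_
      rw [← mul_assoc]
      refine mul_le_mul_of_nonneg_right ?_ ht
      push_cast
      linarith
    have e3 : assocFn Ap (k * t) ≤ (K + 1) * assocFn Ap (n * t) + (K + 1) * C := by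
      have f1 := hD t ht
      have f2 := assoc_mono hAw hA1 ht (show t ≤ n * t by nlinarith)
      have f3 := mul_le_mul_of_nonneg_left f2 (show 0 ≤ K by linarith)
      have f4 := assoc_nonneg hAw hA1 hnt
      nlinarith
    have e4 : 1 / (K + 1) * assocFn Ap (k * t) ≤ assocFn Ap (n * t) + C := by
      rw [one_div_mul_eq_div, div_le_iff₀ hK1]
      linarith
    have e5 : 0 ≤ 1 / (K + 1) * assocFn Ap (n * t) :=
      mul_nonneg (by positivity) (assoc_nonneg hAw hA1 hnt)
    linarith
end

section
/- Let A_p be a weight sequence satisfying (M.1) and (M.2), with associated function A. Then condition (*) fails for A_p; that is, it is NOT the case that for every h > 0 there exist k > 0 and C > 0 such that A(t) + A(kt) ≤ 2A(ht) + C for all t ≥ 0. Equivalently, there exists h > 0 such that for every k > 0 and every C > 0 there is t ≥ 0 with A(t) + A(kt) > 2A(ht) + C. -/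
/-!
Condition (M.2) with `p = q` gives `2 A(s) ≤ A(H s) + log (C₀ A₀)`. Taking `h = 1 / H`, this reads
`2 A(h t) ≤ A(t) + log (C₀ A₀)`, so the inequality `A(t) + A(k t) ≤ 2 A(h t) + C` would bound
`A(k t)` by `log (C₀ A₀) + C`. But `A` is unbounded, since `A(s) ≥ log (s A₀ / A₁)`.
-/

open Filter

/-- The supremum defining `A(t)` is finite: since `A_{p+1} / A_p → ∞`, the sequence
`t ^ p A₀ / A_p` is eventually nonincreasing. -/
lemma assocFn_bddAbove {Ap : ℕ → ℝ} (hA : IsWeightSeq Ap) {t : ℝ} (ht : 0 < t) :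
    BddAbove (Set.range fun p : ℕ => Real.log (t ^ p * Ap 0 / Ap p)) := by
  obtain ⟨hpos, hlim⟩ := hA
  obtain ⟨N, hN⟩ := eventually_atTop.1 (hlim.eventually_ge_atTop t)
  have key : ∀ p, N ≤ p →
      Real.log (t ^ p * Ap 0 / Ap p) ≤ Real.log (t ^ N * Ap 0 / Ap N) := by
    intro p hp
    induction p, hp using Nat.le_induction with
    | base => exact le_rfl
    | succ p hp ih =>
      refine le_trans ?_ ih
      have h0 := hpos 0
      have h1 := hpos p
      have h2 := hpos (p + 1)
      apply Real.log_le_log (by positivity)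
      have h3 : t * Ap p ≤ Ap (p + 1) := (le_div_iff₀ h1).1 (hN p hp)
      rw [div_le_div_iff₀ h2 h1]
      calc t ^ (p + 1) * Ap 0 * Ap p = t ^ p * Ap 0 * (t * Ap p) := by ring
        _ ≤ t ^ p * Ap 0 * Ap (p + 1) := by gcongr
  exact IsBoundedUnder.bddAbove_range
    (isBoundedUnder_of_eventually_le (eventually_atTop.2 ⟨N, key⟩))

lemma log_le_assocFn {Ap : ℕ → ℝ} (hA : IsWeightSeq Ap) {t : ℝ} (ht : 0 < t) (p : ℕ) :
    Real.log (t ^ p * Ap 0 / Ap p) ≤ assocFn Ap t := by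
  rw [assocFn, if_neg ht.ne']
  exact le_ciSup (assocFn_bddAbove hA ht) p

/-- The consequence of (M.2) for the associated function; only the case `p = q` is needed. -/
lemma two_mul_assocFn_le {Ap : ℕ → ℝ} (hA : IsWeightSeq Ap) {C0 H : ℝ} (hC : 1 ≤ C0)
    (hH : 1 ≤ H) (hM : CondM2 Ap C0 H) {s : ℝ} (hs : 0 < s) :
    2 * assocFn Ap s ≤ assocFn Ap (H * s) + Real.log (C0 * Ap 0) := by
  suffices h : assocFn Ap s ≤ (assocFn Ap (H * s) + Real.log (C0 * Ap 0)) / 2 by linarith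
  rw [assocFn, if_neg hs.ne']
  refine ciSup_le fun p => ?_
  have h0 := hA.1 0
  have hp := hA.1 p
  have hpp := hA.1 (p + p)
  have hC' : 0 < C0 := by linarith
  have hH' : 0 < H := by linarith
  have h1 := log_le_assocFn hA (mul_pos hH' hs) (p + p)
  have h2 : Real.log (s ^ p * Ap 0 / Ap p) + Real.log (s ^ p * Ap 0 / Ap p) ≤
      Real.log ((H * s) ^ (p + p) * Ap 0 / Ap (p + p)) + Real.log (C0 * Ap 0) := by
    rw [← Real.log_mul (by positivity) (by positivity),
      ← Real.log_mul (by positivity) (by positivity)]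
    apply Real.log_le_log (by positivity)
    rw [div_mul_div_comm, div_mul_eq_mul_div, div_le_div_iff₀ (by positivity) hpp]
    calc s ^ p * Ap 0 * (s ^ p * Ap 0) * Ap (p + p)
        ≤ s ^ p * Ap 0 * (s ^ p * Ap 0) * (C0 * H ^ (p + p) * Ap p * Ap p) := by
          gcongr
          exact hM p p
      _ = (H * s) ^ (p + p) * Ap 0 * (C0 * Ap 0) * (Ap p * Ap p) := by ring
  linarith

/-- for a weight sequence satisfying (M.1) and (M.2), condition (*)
(`∀ h > 0, ∃ k > 0, ∃ C, A(t) + A(kt) ≤ 2A(ht) + C`) fails. -/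
theorem Lang_condition_fails
    (Ap : ℕ → ℝ) (hAw : IsWeightSeq Ap) (hA1 : CondM1 Ap)
    (hA2 : ∃ C0 H : ℝ, 1 ≤ C0 ∧ 1 ≤ H ∧ CondM2 Ap C0 H) :
    ∃ h : ℝ, 0 < h ∧ ∀ k : ℝ, 0 < k → ∀ C : ℝ, 0 < C →
      ∃ t : ℝ, 0 ≤ t ∧ assocFn Ap t + assocFn Ap (k * t) > 2 * assocFn Ap (h * t) + C := by
  obtain ⟨C0, H, hC, hH, hM⟩ := hA2
  have hH' : 0 < H := by linarith
  refine ⟨1 / H, by positivity, fun k hk C _ => ?_⟩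
  have h0 := hAw.1 0
  have h1 := hAw.1 1
  -- `s = k t` is chosen so that the term `p = 1` alone makes `A(s)` exceed `log (C₀ A₀) + C`.
  set s : ℝ := Real.exp (Real.log (C0 * Ap 0) + C + 1) * Ap 1 / Ap 0 with hs
  have hs0 : 0 < s := by positivity
  have hlow : Real.log (C0 * Ap 0) + C + 1 ≤ assocFn Ap s := by
    have h := log_le_assocFn hAw hs0 1
    have he : s ^ 1 * Ap 0 / Ap 1 = Real.exp (Real.log (C0 * Ap 0) + C + 1) := by
      rw [hs]
      field_simp
    rwa [he, Real.log_exp] at h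
  have ht : 0 < s / k := by positivity
  refine ⟨s / k, ht.le, ?_⟩
  have hup := two_mul_assocFn_le hAw hC hH hM (s := 1 / H * (s / k)) (by positivity)
  rw [show H * (1 / H * (s / k)) = s / k by field_simp] at hup
  rw [show k * (s / k) = s by field_simp]
  linarith
end

section
/- Let A_p be a weight sequence with associated function A, and let V = (v_n)_{n∈ℕ} be a decreasing weight system on ℝ^d that is {A_p}-admissible, i.e., for every n ∈ ℕ and every λ > 0 there are m ≥ n and C > 0 with v_m(x+t) ≤ C·v_n(x)·e^{A(λt)} for all x, t ∈ ℝ^d. Then for every v in the maximal Nachbin family V̄ associated with V and every λ > 0 there exists v̄ ∈ V̄ with v(x+t) ≤ v̄(x)·e^{A(λt)} for all x, t ∈ ℝ^d. -/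
/-!
A function `v` of the maximal Nachbin family is bounded by `c_m V_m` for every `m`. Choosing `m`
and `C` by admissibility for a given `n` yields `v (x + t) ≤ D_n V_n x exp (A (lam t))` with
`D_n = c_m C`. The function `vb = inf_n D_n V_n` then satisfies the translation estimate; it is
upper semicontinuous as an infimum of continuous functions, and `vb / V_n ≤ D_n` by construction.
-/

open Filter

/-- A decreasing weight system: a pointwise decreasing sequence of positive continuous
functions. -/
def DecWeightSys {X : Type*} [TopologicalSpace X] (v : ℕ → X → ℝ) : Prop :=
  (∀ n, Continuous (v n)) ∧ (∀ n x, 0 < v n x) ∧ (∀ n x, v (n + 1) x ≤ v n x)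

/-- Membership in the maximal Nachbin family associated with `V`. -/
def InNachbin {X : Type*} [TopologicalSpace X] (V : ℕ → X → ℝ) (v : X → ℝ) : Prop :=
  (∀ x, 0 ≤ v x) ∧ UpperSemicontinuous v ∧ ∀ n : ℕ, ∃ C : ℝ, ∀ x, v x / V n x ≤ C

/-- if the decreasing weight system `V` on `ℝ^d` is `{A_p}`-admissible,
then the translation estimate passes to the maximal Nachbin family. -/
theorem Nachbin_admissible_translation
    (d : ℕ) (Ap : ℕ → ℝ) (hAw : IsWeightSeq Ap)
    (V : ℕ → EuclideanSpace ℝ (Fin d) → ℝ) (hV : DecWeightSys V)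
    (hadm : ∀ n : ℕ, ∀ lam : ℝ, 0 < lam → ∃ m : ℕ, n ≤ m ∧ ∃ C : ℝ, 0 < C ∧
      ∀ x t : EuclideanSpace ℝ (Fin d),
        V m (x + t) ≤ C * V n x * Real.exp (assocFn Ap (lam * ‖t‖))) :
    ∀ v : EuclideanSpace ℝ (Fin d) → ℝ, InNachbin V v → ∀ lam : ℝ, 0 < lam →
      ∃ vb : EuclideanSpace ℝ (Fin d) → ℝ, InNachbin V vb ∧
        ∀ x t : EuclideanSpace ℝ (Fin d),
          v (x + t) ≤ vb x * Real.exp (assocFn Ap (lam * ‖t‖)) := by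
  intro v ⟨hv0, _, hvC⟩ lam hlam
  obtain ⟨hcont, hpos, _⟩ := hV
  have key : ∀ n : ℕ, ∃ D : ℝ, 0 ≤ D ∧ ∀ x t : EuclideanSpace ℝ (Fin d),
      v (x + t) ≤ D * V n x * Real.exp (assocFn Ap (lam * ‖t‖)) := by
    intro n
    obtain ⟨m, _, C, hC, h⟩ := hadm n lam hlam
    obtain ⟨c, hc⟩ := hvC m
    have hc0 : 0 ≤ c := (div_nonneg (hv0 0) (hpos m 0).le).trans (hc 0)
    refine ⟨c * C, mul_nonneg hc0 hC.le, fun x t => ?_⟩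
    calc v (x + t) ≤ c * V m (x + t) := (div_le_iff₀ (hpos m _)).1 (hc _)
      _ ≤ c * (C * V n x * Real.exp (assocFn Ap (lam * ‖t‖))) :=
        mul_le_mul_of_nonneg_left (h x t) hc0
      _ = _ := by ring
  choose D hD0 hD using key
  have hbdd : ∀ x, BddBelow (Set.range fun n => D n * V n x) := fun x =>
    ⟨0, by rintro _ ⟨n, rfl⟩; exact mul_nonneg (hD0 n) (hpos n x).le⟩
  refine ⟨fun x => ⨅ n, D n * V n x, ⟨fun x => ?_, ?_, fun n => ⟨D n, fun x => ?_⟩⟩,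
    fun x t => ?_⟩
  · exact Real.iInf_nonneg fun n => mul_nonneg (hD0 n) (hpos n x).le
  · exact upperSemicontinuous_ciInf hbdd fun n =>
      (continuous_const.mul (hcont n)).upperSemicontinuous
  · exact (div_le_iff₀ (hpos n x)).2 (ciInf_le (hbdd x) n)
  · rw [← div_le_iff₀ (Real.exp_pos _)]
    exact le_ciInf fun n => (div_le_iff₀ (Real.exp_pos _)).2 (hD n x t)
end
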